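/- arXiv:2403.06550 — 4 statements merged into one kernel-verified Lean document; each statement's English description precedes it below -/
import Mathlib

section
/- For real exponents p, q with 2 < p < q and a real coefficient a ≥ 0, let φ : (0,∞) → (0,∞) be defined by φ(v) = v^(p−2) + a·v^(q−2) (a strictly increasing bijection of (0,∞) onto itself) and let φ⁻¹ denote its inverse. Then for every x > 0 and every real c with 0 < c ≤ 1, one has φ⁻¹(c·x) ≤ c^(1/(q−2))·φ⁻¹(x). -/
/-!
Write `φ v = v ^ (p - 2) + a * v ^ (q - 2)` and `s = c ^ (1 / (q - 2)) ≤ 1`. Since `p < q`,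
`s ^ (p - 2) ≥ s ^ (q - 2) = c`, hence `φ (s * w) ≥ c * φ w` for every `w > 0`. Taking
`w = φinv x` gives `φ (s * w) ≥ c * x = φ (φinv (c * x))`, and `φ` is strictly increasing.
-/


/-- Remark 3.6 (concrete form): with `φ(v) = v^(p-2) + a·v^(q-2)` a strictly increasing
bijection of `(0,∞)` onto itself and `φinv` its inverse, one has
`φinv (c·x) ≤ c^(1/(q-2)) · φinv x` for all `x > 0` and `0 < c ≤ 1`. -/
theorem phi_inv_scaling
    (p q a : ℝ) (hp : 2 < p) (hpq : p < q) (ha : 0 ≤ a)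
    (φinv : ℝ → ℝ)
    (hpos : ∀ x > (0 : ℝ), 0 < φinv x)
    (hleft : ∀ v > (0 : ℝ), φinv (v ^ (p - 2) + a * v ^ (q - 2)) = v)
    (hright : ∀ x > (0 : ℝ), (φinv x) ^ (p - 2) + a * (φinv x) ^ (q - 2) = x) :
    ∀ x > (0 : ℝ), ∀ c : ℝ, 0 < c → c ≤ 1 →
      φinv (c * x) ≤ c ^ (1 / (q - 2)) * φinv x := by
  intro x hx c hc hc1
  have hw := hpos x hx
  have hcx : 0 < c * x := mul_pos hc hx
  have hrx := hright x hx
  have hrcx := hright (c * x) hcx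
  set w := φinv x
  set u := φinv (c * x)
  have hq2 : 0 < q - 2 := by linarith
  set s := c ^ (1 / (q - 2)) with hs
  have hs0 : 0 < s := Real.rpow_pos_of_pos hc _
  have hs1 : s ≤ 1 := Real.rpow_le_one hc.le hc1 (by positivity)
  have hsq : s ^ (q - 2) = c := by
    rw [hs, ← Real.rpow_mul hc.le, one_div_mul_cancel hq2.ne', Real.rpow_one]
  have hsp : c ≤ s ^ (p - 2) := by
    rw [← hsq]
    exact Real.rpow_le_rpow_of_exponent_ge hs0 hs1 (by linarith)
  -- `φ (s * w) ≥ c * φ w = φ u`, so `s * w < u` would contradict strict monotonicity of `φ`.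
  by_contra! hlt
  have hsw : 0 ≤ s * w := by positivity
  have h1 : (s * w) ^ (p - 2) < u ^ (p - 2) := Real.rpow_lt_rpow hsw hlt (by linarith)
  have h2 : a * (s * w) ^ (q - 2) ≤ a * u ^ (q - 2) :=
    mul_le_mul_of_nonneg_left (Real.rpow_le_rpow hsw hlt.le hq2.le) ha
  rw [Real.mul_rpow hs0.le hw.le] at h1 h2
  rw [hsq] at h2
  have h3 : c * w ^ (p - 2) ≤ s ^ (p - 2) * w ^ (p - 2) :=
    mul_le_mul_of_nonneg_right hsp (Real.rpow_nonneg hw.le _)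
  have h4 : c * x = c * w ^ (p - 2) + a * (c * w ^ (q - 2)) := by
    rw [← hrx]; ring
  linarith
end

section
/- For real exponents p, q with 2 < p < q and a real coefficient a ≥ 0, the function Ψ : (0,∞) → ℝ defined by Ψ(s) = s² / (s^p + a·s^q) satisfies Ψ(s·t) ≥ Ψ(s)·Ψ(t) for all real s with 0 < s ≤ 1 and all t > 0. -/
/-- For `2 < p < q` and `a ≥ 0`, the function `Ψ(s) = s² / (s^p + a·s^q)` satisfies
`Ψ(s·t) ≥ Ψ(s)·Ψ(t)` for all `0 < s ≤ 1` and all `t > 0`. -/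
theorem Psi_supermultiplicative
    (p q a : ℝ) (hp : 2 < p) (hpq : p < q) (ha : 0 ≤ a) :
    ∀ s : ℝ, 0 < s → s ≤ 1 → ∀ t > (0 : ℝ),
      (s * t) ^ 2 / ((s * t) ^ p + a * (s * t) ^ q)
        ≥ (s ^ 2 / (s ^ p + a * s ^ q)) * (t ^ 2 / (t ^ p + a * t ^ q)) := by
  intro s hs hs1 t ht
  have hsp : 0 < s ^ p := Real.rpow_pos_of_pos hs p
  have hsq : 0 < s ^ q := Real.rpow_pos_of_pos hs q
  have htp : 0 < t ^ p := Real.rpow_pos_of_pos ht p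
  have htq : 0 < t ^ q := Real.rpow_pos_of_pos ht q
  have hle : s ^ q ≤ s ^ p := Real.rpow_le_rpow_of_exponent_ge hs hs1 hpq.le
  rw [ge_iff_le, div_mul_div_comm, ← mul_pow, Real.mul_rpow hs.le ht.le,
    Real.mul_rpow hs.le ht.le]
  -- The numerators agree, so it remains to compare the denominators. Expanding the product,
  -- the cross term `a * s ^ p * t ^ q` alone dominates `a * s ^ q * t ^ q`, because `s ≤ 1`.
  apply div_le_div_of_nonneg_left (by positivity) (by positivity)
  have hcross : a * (s ^ q * t ^ q) ≤ a * (s ^ p * t ^ q) := by gcongr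
  have hrest : 0 ≤ a * s ^ q * t ^ p + a ^ 2 * (s ^ q * t ^ q) := by positivity
  linarith
end

section
/- For real exponents p, q with 2 < p < q and a real coefficient a ≥ 0, let Ψ : (0,∞) → (0,∞) be defined by Ψ(s) = s² / (s^p + a·s^q) (a strictly decreasing bijection of (0,∞) onto itself) and let Ψ⁻¹ denote its inverse. Then for every real k with 0 < k ≤ 1 and every x > 0 one has Ψ(k·Ψ⁻¹(x)) ≥ x·Ψ(k). -/
/-! Write `r = Ψinv x`, so that `x = Ψ(r)`; the claim is then the supermultiplicativity
`Ψ(r) Ψ(k) ≤ Ψ(k r)` for `k ≤ 1`. Cancelling `k² r²`, this says that the denominators satisfy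
`(kr)^p + a (kr)^q ≤ (r^p + a r^q) (k^p + a k^q)`. Expanding the right-hand side yields
`k^p r^p + a k^p r^q` plus nonnegative terms, and `k^q ≤ k^p` because `k ≤ 1` and `p < q`. -/

/-- For `2 < p < q` and `a ≥ 0`, with `Ψ(s) = s² / (s^p + a·s^q)` a strictly decreasing
bijection of `(0,∞)` onto itself and `Ψinv` its inverse, one has
`Ψ(k·Ψinv(x)) ≥ x·Ψ(k)` for all `0 < k ≤ 1` and `x > 0`. -/
theorem Psi_of_scaled_inverse
    (p q a : ℝ) (hp : 2 < p) (hpq : p < q) (ha : 0 ≤ a)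
    (Ψinv : ℝ → ℝ)
    (hpos : ∀ x > (0 : ℝ), 0 < Ψinv x)
    (hleft : ∀ s > (0 : ℝ), Ψinv (s ^ 2 / (s ^ p + a * s ^ q)) = s)
    (hright : ∀ x > (0 : ℝ),
      (Ψinv x) ^ 2 / ((Ψinv x) ^ p + a * (Ψinv x) ^ q) = x) :
    ∀ k : ℝ, 0 < k → k ≤ 1 → ∀ x > (0 : ℝ),
      (k * Ψinv x) ^ 2 / ((k * Ψinv x) ^ p + a * (k * Ψinv x) ^ q)
        ≥ x * (k ^ 2 / (k ^ p + a * k ^ q)) := by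
  intro k hk hk1 x hx
  have hr := hpos x hx
  have hx_eq := hright x hx
  set r := Ψinv x
  have hkp := Real.rpow_pos_of_pos hk p
  have hkq := Real.rpow_pos_of_pos hk q
  have hrp := Real.rpow_pos_of_pos hr p
  have hrq := Real.rpow_pos_of_pos hr q
  have hkqp : k ^ q ≤ k ^ p := Real.rpow_le_rpow_of_exponent_ge hk hk1 hpq.le
  rw [← hx_eq, Real.mul_rpow hk.le hr.le, Real.mul_rpow hk.le hr.le, ge_iff_le,
    div_mul_div_comm, mul_pow, mul_comm (r ^ 2)]
  have key : a * (k ^ q * r ^ q) ≤ a * (k ^ p * r ^ q) := by gcongr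
  have h1 : 0 ≤ a * (k ^ q * r ^ p) := by positivity
  have h2 : 0 ≤ a ^ 2 * (k ^ q * r ^ q) := by positivity
  apply div_le_div_of_nonneg_left (by positivity) (by positivity)
  linarith
end

section
/- Let (a_i)_{i∈ℕ} be a sequence of nonnegative real numbers whose series Σ_{i=0}^∞ a_i diverges. Then there exists a strictly increasing sequence of indices (i_n)_{n∈ℕ} with i_0 = 0 such that: (i) for every n, a_{i_{n+1}} ≥ 2^(i_n − i_{n+1})·a_{i_n}; and (ii) for every l ∈ ℕ, Σ_{i=0}^{i_l} a_i ≤ 3·Σ_{j=0}^{l} a_{i_j}. -/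
/-!
The sequence is built greedily. Put `b k = 2 ^ k * a k`; after the index `m` take the least
`k > m` with `b m ≤ b k`. Such a `k` exists (`exists_next`), since otherwise
`a k < 2 ^ (m - k) * a m` for all `k > m`, and the series would converge by comparison with a
geometric one. By minimality every skipped index `j` satisfies `a j ≤ 2 ^ (m - j) * a m`, so the
terms skipped between `m` and `k` add up to at most `a m` (`sum_skipped_le`): each selected term
is charged at most twice, which gives the partial-sum bound even with the constant `2`.
-/

lemma exists_next (a : ℕ → ℝ) (hnonneg : ∀ i, 0 ≤ a i) (hdiv : ¬ Summable a) (m : ℕ) :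
    ∃ k, m < k ∧ (2 : ℝ) ^ m * a m ≤ 2 ^ k * a k ∧
      ∀ j, m < j → j < k → (2 : ℝ) ^ j * a j ≤ 2 ^ m * a m := by
  classical
  have hex : ∃ k, m < k ∧ (2 : ℝ) ^ m * a m ≤ 2 ^ k * a k := by
    by_contra! h
    apply hdiv
    rw [← summable_nat_add_iff (m + 1)]
    refine Summable.of_nonneg_of_le (fun n => hnonneg _) (fun n => ?_)
      ((summable_geometric_two).mul_left (2 ^ m * a m))
    have h1 := (h (n + (m + 1)) (by omega)).le
    have h2 : (2 : ℝ) ^ n * a (n + (m + 1)) ≤ 2 ^ (n + (m + 1)) * a (n + (m + 1)) :=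
      mul_le_mul_of_nonneg_right (pow_le_pow_right₀ (by norm_num) (by omega)) (hnonneg _)
    rw [one_div, inv_pow, ← div_eq_mul_inv, le_div_iff₀ (by positivity)]
    linarith
  refine ⟨Nat.find hex, (Nat.find_spec hex).1, (Nat.find_spec hex).2, fun j hj hjk => ?_⟩
  have := Nat.find_min hex hjk
  push Not at this
  exact (this hj).le

/-- The geometric estimate for the skipped terms, with the remainder `a m / 2 ^ d` kept so that
the induction on the number `d` of skipped indices closes. -/
lemma sum_skipped_le (a : ℕ → ℝ) (m d : ℕ)
    (h : ∀ j, m < j → j < m + 1 + d → (2 : ℝ) ^ j * a j ≤ 2 ^ m * a m) :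
    ∑ k ∈ Finset.range (m + 1 + d), a k + a m / 2 ^ d
      ≤ ∑ k ∈ Finset.range (m + 1), a k + a m := by
  induction d with
  | zero => simp
  | succ d ih =>
    have h1 := ih fun j hj hj' => h j hj (by omega)
    have h2 := h (m + 1 + d) (by omega) (by omega)
    have h3 : a (m + 1 + d) ≤ a m / 2 ^ (d + 1) := by
      rw [le_div_iff₀ (by positivity)]
      have : (2 : ℝ) ^ m * (a (m + 1 + d) * 2 ^ (d + 1)) ≤ 2 ^ m * a m := by
        calc _ = (2 : ℝ) ^ (m + 1 + d) * a (m + 1 + d) := by ring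
          _ ≤ _ := h2
      exact le_of_mul_le_mul_left this (by positivity)
    have h4 : a m / 2 ^ d = a m / 2 ^ (d + 1) + a m / 2 ^ (d + 1) := by
      field_simp
      ring
    rw [← add_assoc, Finset.sum_range_succ]
    linarith

/-- Combinatorial core of Lemma 6.1: from a divergent series of nonnegative reals
one extracts a strictly increasing sequence of indices, starting at `0`, along which
consecutive terms do not decay faster than geometrically and whose partial sums
control the full partial sums up to a factor `3`. -/
theorem subsequence_extraction
    (a : ℕ → ℝ) (hnonneg : ∀ i, 0 ≤ a i) (hdiv : ¬ Summable a) :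
    ∃ i : ℕ → ℕ, StrictMono i ∧ i 0 = 0 ∧
      (∀ n : ℕ, a (i (n + 1)) ≥ (2 : ℝ) ^ ((i n : ℤ) - (i (n + 1) : ℤ)) * a (i n)) ∧
      (∀ l : ℕ, ∑ k ∈ Finset.range (i l + 1), a k
          ≤ 3 * ∑ j ∈ Finset.range (l + 1), a (i j)) := by
  choose f hlt hdecay hskip using exists_next a hnonneg hdiv
  let i : ℕ → ℕ := fun n => f^[n] 0
  have hi : ∀ n, i (n + 1) = f (i n) := fun n => Function.iterate_succ_apply' f n 0
  refine ⟨i, strictMono_nat_of_lt_succ fun n => by rw [hi]; exact hlt _, rfl, fun n => ?_,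
    fun l => ?_⟩
  · rw [hi, zpow_sub₀ (by norm_num), zpow_natCast, zpow_natCast, ge_iff_le, div_mul_eq_mul_div,
      div_le_iff₀ (by positivity), mul_comm (a _)]
    exact hdecay _
  -- The extra `a (i l)` pays for the terms skipped after `i l`.
  · have key : ∑ k ∈ Finset.range (i l + 1), a k + a (i l)
        ≤ 2 * ∑ j ∈ Finset.range (l + 1), a (i j) := by
      induction l with
      | zero => simp [i, two_mul]
      | succ l ih =>
        obtain ⟨d, hd⟩ := Nat.exists_eq_add_of_le (Nat.succ_le_of_lt (hlt (i l)))
        have h1 := sum_skipped_le a (i l) d fun j hj hj' => hskip _ j hj (by omega)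
        have h2 : 0 ≤ a (i l) / 2 ^ d := div_nonneg (hnonneg _) (by positivity)
        rw [Nat.succ_eq_add_one] at hd
        rw [← hd] at h1
        rw [Finset.sum_range_succ _ (l + 1), hi, Finset.sum_range_succ _ (f (i l))]
        linarith
    have hpos : 0 ≤ ∑ j ∈ Finset.range (l + 1), a (i j) :=
      Finset.sum_nonneg fun j _ => hnonneg _
    linarith [hnonneg (i l)]
end
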